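/- arXiv:1911.12432 — 2 statements merged into one kernel-verified Lean document; each statement's English description precedes it below -/
import Mathlib

section
/- Let M be the output of the S-Greedy algorithm: scanning s₁,…,s_n in order, at node sᵢ, if some edge sᵢt ∈ E can be added to the current set keeping it a feasible d-distance matching, add the edge sᵢt_j with the smallest index j among such edges. Then 2|M| ≥ |M*| for every d-distance matching M* of G. -/
open Finset

/-- `M` is a `d`-distance matching of the bipartite graph with left node set `Fin n`
(ordered) and right node set `Fin k` (indexed), whose edge set is `E`. -/
def DDM {n k : ℕ} (d : ℕ) (E M : Finset (Fin n × Fin k)) : Prop :=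
  M ⊆ E ∧ (∀ e ∈ M, ∀ f ∈ M, e.1 = f.1 → e = f) ∧
    (∀ e ∈ M, ∀ f ∈ M, e.2 = f.2 → e ≠ f → d ≤ Nat.dist e.1.val f.1.val)

open Classical in
/-- The `S`-greedy algorithm: scan the nodes of `S` in order; at node `s`, if some edge
`s t` can be added keeping feasibility, add the one with the smallest index of `t`. -/
noncomputable def sGreedy {n k : ℕ} (d : ℕ) (E : Finset (Fin n × Fin k)) :
    List (Fin n) → Finset (Fin n × Fin k) → Finset (Fin n × Fin k)
  | [], M => M
  | s :: rest, M =>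
      sGreedy d E rest
        (if h : (Finset.univ.filter
            (fun t : Fin k => (s, t) ∈ E ∧ DDM d E (insert (s, t) M))).Nonempty
         then insert (s, (Finset.univ.filter
            (fun t : Fin k => (s, t) ∈ E ∧ DDM d E (insert (s, t) M))).min' h) M
         else M)

theorem sGreedy_mono {n k : ℕ} (d : ℕ) (E : Finset (Fin n × Fin k)) (l : List (Fin n)) :
    ∀ M, M ⊆ sGreedy d E l M := by
  induction l with
  | nil => intro M; simp [sGreedy]
  | cons s rest ih =>
    intro M
    rw [sGreedy]
    refine Finset.Subset.trans ?_ (ih _)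
    split_ifs
    · exact Finset.subset_insert _ _
    · exact Finset.Subset.refl _

theorem sGreedy_max {n k : ℕ} (d : ℕ) (E : Finset (Fin n × Fin k)) (l : List (Fin n)) :
    l.Pairwise (· < ·) → ∀ M, DDM d E M → (∀ e ∈ M, ∀ s ∈ l, e.1 < s) →
    ∀ s ∈ l, ∀ t, (s, t) ∈ E →
      (∃ t', (s, t') ∈ sGreedy d E l M) ∨
      ∃ s', (s', t) ∈ sGreedy d E l M ∧ s'.val < s.val ∧ s.val < s'.val + d := by
  classical
  induction l with
  | nil => intro _ M _ _ s hs; simp at hs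
  | cons a rest ih =>
    intro hp M hM hlt s hs t hst
    rw [List.pairwise_cons] at hp
    rw [sGreedy]
    split_ifs with h
    · have hmem := Finset.min'_mem _ h
      rw [Finset.mem_filter] at hmem
      rcases List.mem_cons.1 hs with rfl | hs
      · left
        exact ⟨_, sGreedy_mono _ _ _ _ (Finset.mem_insert_self _ _)⟩
      · refine ih hp.2 _ hmem.2.2 ?_ s hs t hst
        intro e he b hb
        rcases Finset.mem_insert.1 he with rfl | he
        · exact hp.1 b hb
        · exact hlt e he b (List.mem_cons_of_mem _ hb)
    · rcases List.mem_cons.1 hs with rfl | hs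
      · right
        by_contra hcon
        apply h
        refine ⟨t, ?_⟩
        rw [Finset.mem_filter]
        have hfar : ∀ e ∈ M, e.2 = t → e.1.val + d ≤ s.val := by
          rintro ⟨s', t'⟩ he rfl
          by_contra hlt'
          exact hcon ⟨s', sGreedy_mono _ _ _ _ he, hlt _ he s (by simp), by simpa using hlt'⟩
        have hl : ∀ e ∈ M, e.1 < s := fun e he => hlt e he s (by simp)
        refine ⟨Finset.mem_univ _, hst, ?_, ?_, ?_⟩
        · exact Finset.insert_subset hst hM.1
        · intro e he f hf hef
          rcases Finset.mem_insert.1 he with rfl | he' <;>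
            rcases Finset.mem_insert.1 hf with rfl | hf'
          · rfl
          · exact absurd hef (hl f hf').ne'
          · exact absurd hef (hl e he').ne
          · exact hM.2.1 e he' f hf' hef
        · intro e he f hf hef hne
          rcases Finset.mem_insert.1 he with rfl | he' <;>
            rcases Finset.mem_insert.1 hf with rfl | hf'
          · exact absurd rfl hne
          · have := hfar f hf' hef.symm
            simp only [Nat.dist]; omega
          · have := hfar e he' hef
            simp only [Nat.dist]; omega
          · exact hM.2.2 e he' f hf' hef hne
      · exact ih hp.2 _ hM (fun e he b hb => hlt e he b (List.mem_cons_of_mem _ hb)) s hs t hst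

/-- `S`-Greedy is a 2-approximation algorithm for the unweighted `d`-distance matching
problem. -/
theorem stmt12 {n k : ℕ} (d : ℕ) (hd : 1 ≤ d) (E : Finset (Fin n × Fin k)) :
    ∀ Ms, DDM d E Ms → Ms.card ≤ 2 * (sGreedy d E (List.finRange n) ∅).card := by
  classical
  intro Ms hMs
  have key := sGreedy_max d E (List.finRange n) (List.pairwise_lt_finRange n) ∅
    (by simp [DDM]) (by simp)
  generalize sGreedy d E (List.finRange n) ∅ = G at key
  have hA : (Ms.filter (fun e => ∃ t', (e.1, t') ∈ G)).card ≤ G.card := by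
    have h : ∀ e : Fin n × Fin k, ∃ t', (∃ t', (e.1, t') ∈ G) → (e.1, t') ∈ G := by
      intro e
      by_cases h : ∃ t', (e.1, t') ∈ G
      · obtain ⟨t', h'⟩ := h
        exact ⟨t', fun _ => h'⟩
      · exact ⟨e.2, fun h' => absurd h' h⟩
    choose f hf using h
    refine Finset.card_le_card_of_injOn (fun e => (e.1, f e)) ?_ ?_
    · intro e he
      exact hf e (Finset.mem_filter.1 he).2
    · intro e he g hg heg
      exact hMs.2.1 e (Finset.mem_filter.1 he).1 g (Finset.mem_filter.1 hg).1
        (Prod.ext_iff.1 heg).1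
  have hB : (Ms.filter (fun e => ¬ ∃ t', (e.1, t') ∈ G)).card ≤ G.card := by
    have h : ∀ e : Fin n × Fin k, ∃ s' : Fin n,
        e ∈ Ms.filter (fun e => ¬ ∃ t', (e.1, t') ∈ G) →
        (s', e.2) ∈ G ∧ s'.val < e.1.val ∧ e.1.val < s'.val + d := by
      intro e
      by_cases h : e ∈ Ms.filter (fun e => ¬ ∃ t', (e.1, t') ∈ G)
      · have h2 := Finset.mem_filter.1 h
        rcases key e.1 (List.mem_finRange _) e.2 (hMs.1 h2.1) with h3 | ⟨s', h3⟩
        · exact absurd h3 h2.2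
        · exact ⟨s', fun _ => h3⟩
      · exact ⟨e.1, fun h' => absurd h' h⟩
    choose f hf using h
    refine Finset.card_le_card_of_injOn (fun e => (f e, e.2)) ?_ ?_
    · intro e he
      exact (hf e he).1
    · intro e he g hg heg
      by_contra hne
      have h1 := hf e he
      have h2 := hf g hg
      obtain ⟨h3, h4⟩ := Prod.ext_iff.1 heg
      simp only at h3 h4
      have h5 := hMs.2.2 e (Finset.mem_filter.1 he).1 g (Finset.mem_filter.1 hg).1 h4 hne
      rw [h3] at h1
      simp only [Nat.dist] at h5
      omega
  have := Finset.card_filter_add_card_filter_not (s := Ms) (fun e => ∃ t', (e.1, t') ∈ G)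
  omega
end

section
/- The output of the T-Greedy algorithm equals the output of the S-Greedy algorithm, i.e., M_T = M_S; consequently T-Greedy is also a 2-approximation algorithm for the unweighted d-distance matching problem: 2|M_T| ≥ |M*| for every d-distance matching M*. -/
open Finset

/-- One row of the `T`-greedy algorithm for the node `t_j`: scan `i = 0, 1, …`; whenever
`s_i t_j ∈ E` and `s_i` is not yet covered (by `C`), add `s_i t_j` and continue from
`i + d`, otherwise continue from `i + 1`. (`fuel` bounds the number of steps; starting
with `fuel = n` this performs the whole scan whenever `d ≥ 1`.) -/
def tGreedyRow {n k : ℕ} (d : ℕ) (E : Finset (Fin n × Fin k)) (j : Fin k)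
    (C : Finset (Fin n)) : ℕ → ℕ → Finset (Fin n × Fin k)
  | 0, _ => ∅
  | fuel + 1, i =>
      if h : i < n then
        if (⟨i, h⟩, j) ∈ E ∧ ⟨i, h⟩ ∉ C then
          insert (⟨i, h⟩, j) (tGreedyRow d E j C fuel (i + d))
        else tGreedyRow d E j C fuel (i + 1)
      else ∅

/-- The `T`-greedy algorithm: process the nodes `t_j` of `T` in order of their indices,
running a row scan for each while maintaining the set `C` of covered `S`-nodes. -/
def tGreedyAux {n k : ℕ} (d : ℕ) (E : Finset (Fin n × Fin k)) :
    List (Fin k) → Finset (Fin n × Fin k) → Finset (Fin n) → Finset (Fin n × Fin k)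
  | [], M, _ => M
  | j :: rest, M, C =>
      tGreedyAux d E rest (M ∪ tGreedyRow d E j C n 0)
        (C ∪ (tGreedyRow d E j C n 0).image Prod.fst)

/-- The output of the `T`-greedy algorithm. -/
def tGreedy {n k : ℕ} (d : ℕ) (E : Finset (Fin n × Fin k)) : Finset (Fin n × Fin k) :=
  tGreedyAux d E (List.finRange k) ∅ ∅


/-- The recursive membership condition satisfied by both greedy outputs. -/
def GC {n k : ℕ} (d : ℕ) (E M : Finset (Fin n × Fin k)) (s : Fin n) (t : Fin k) : Prop :=
  (s, t) ∈ E ∧ (∀ t' < t, (s, t') ∉ M) ∧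
    ∀ s' : Fin n, s' < s → s.val < s'.val + d → (s', t) ∉ M

theorem GC_unique {n k : ℕ} (d : ℕ) (E M N : Finset (Fin n × Fin k))
    (hM : ∀ s t, (s, t) ∈ M ↔ GC d E M s t) (hN : ∀ s t, (s, t) ∈ N ↔ GC d E N s t) :
    M = N := by
  have key : ∀ s t, (s, t) ∈ M ↔ (s, t) ∈ N := by
    intro s
    induction s using WellFoundedLT.induction with
    | ind s ihs =>
      intro t
      induction t using WellFoundedLT.induction with
      | ind t iht =>
        rw [hM, hN]
        unfold GC
        refine and_congr Iff.rfl (and_congr ?_ ?_)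
        · exact forall₂_congr fun t' h => not_congr (iht t' h)
        · exact forall₂_congr fun s' h => forall_congr' fun _ => not_congr (ihs s' h t)
  ext ⟨s, t⟩
  exact key s t

theorem row_spec {n k : ℕ} (d : ℕ) (hd : 1 ≤ d) (E : Finset (Fin n × Fin k)) (j : Fin k)
    (C : Finset (Fin n)) : ∀ (fuel i : ℕ), n ≤ i + fuel → ∀ s t,
    ((s, t) ∈ tGreedyRow d E j C fuel i ↔ t = j ∧ i ≤ s.val ∧ (s, j) ∈ E ∧ s ∉ C ∧
      ∀ s' : Fin n, s' < s → s.val < s'.val + d → (s', j) ∉ tGreedyRow d E j C fuel i) := by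
  intro fuel
  induction fuel with
  | zero =>
    intro i hi s t
    have := s.isLt
    simp only [tGreedyRow, Finset.notMem_empty, false_iff]
    rintro ⟨-, h, -⟩
    omega
  | succ fuel ih =>
    intro i hi s t
    have hs := s.isLt
    simp only [tGreedyRow]
    split_ifs with h h2
    · have IH := ih (i + d) (by omega)
      have hge : ∀ s' t', (s', t') ∈ tGreedyRow d E j C fuel (i + d) → i + d ≤ s'.val :=
        fun s' t' h' => ((IH s' t').1 h').2.1
      simp only [Finset.mem_insert, Prod.mk.injEq]
      constructor
      · rintro (⟨rfl, rfl⟩ | h3)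
        · refine ⟨rfl, le_refl _, h2.1, h2.2, ?_⟩
          rintro s' hs' _ (⟨rfl, -⟩ | h4)
          · exact absurd hs' (lt_irrefl _)
          · have := hge _ _ h4
            have : s'.val < i := hs'
            omega
        · obtain ⟨a, b, c, e, f⟩ := (IH s t).1 h3
          refine ⟨a, by omega, c, e, ?_⟩
          rintro s' hs' h5 (⟨rfl, -⟩ | h4)
          · simp only at h5; omega
          · exact f s' hs' h5 h4
      · rintro ⟨rfl, b, c, e, f⟩
        by_cases hsi : s.val = i
        · left; exact ⟨Fin.ext hsi, rfl⟩
        · right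
          have hlt : (⟨i, h⟩ : Fin n) < s := by
            rw [Fin.lt_def]; simp only; omega
          have : ¬ s.val < i + d := fun h6 => f ⟨i, h⟩ hlt h6 (Or.inl (by simp))
          exact (IH s t).2 ⟨rfl, by omega, c, e, fun s' a b h7 => f s' a b (Or.inr h7)⟩
    · rw [ih (i + 1) (by omega) s t]
      constructor
      · rintro ⟨a, b, c⟩
        exact ⟨a, by omega, c⟩
      · rintro ⟨a, b, c, e, f⟩
        refine ⟨a, ?_, c, e, f⟩
        rcases Nat.lt_or_ge i s.val with h3 | h3
        · omega
        · exfalso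
          have : s = ⟨i, h⟩ := Fin.ext (by simp only; omega)
          subst this
          exact h2 ⟨c, e⟩
    · simp only [Finset.notMem_empty, false_iff]
      rintro ⟨-, h', -⟩
      omega

theorem taux_spec {n k : ℕ} (d : ℕ) (hd : 1 ≤ d) (E : Finset (Fin n × Fin k)) :
    ∀ (l : List (Fin k)) (M : Finset (Fin n × Fin k)) (C : Finset (Fin n)),
    l.Pairwise (· < ·) → (∀ t, t ∈ l ∨ ∀ t' ∈ l, t < t') →
    (∀ s t, (s, t) ∈ M → ∀ t' ∈ l, t < t') →
    (∀ s, s ∈ C ↔ ∃ t, (s, t) ∈ M) →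
    ∀ s t, (s, t) ∈ tGreedyAux d E l M C ↔
      (s, t) ∈ M ∨ (t ∈ l ∧ GC d E (tGreedyAux d E l M C) s t) := by
  intro l
  induction l with
  | nil => intro M C _ _ _ _ s t; simp [tGreedyAux]
  | cons j rest ih =>
    intro M C hl hall hM hC s t
    have hR := row_spec d hd E j C n 0 (by omega)
    simp only [tGreedyAux]
    set R := tGreedyRow d E j C n 0 with hRdef
    rw [List.pairwise_cons] at hl
    have hRj : ∀ s t, (s, t) ∈ R → t = j := fun s t h => ((hR s t).1 h).1
    have IH := ih (M ∪ R) (C ∪ R.image Prod.fst) hl.2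
      (by
        intro t
        rcases hall t with h | h
        · rcases List.mem_cons.1 h with rfl | h
          · right; exact hl.1
          · left; exact h
        · right; exact fun t' ht' => h t' (List.mem_cons_of_mem _ ht'))
      (by
        intro s t h t' ht'
        rcases Finset.mem_union.1 h with h | h
        · exact hM s t h t' (List.mem_cons_of_mem _ ht')
        · rw [hRj s t h]; exact hl.1 t' ht')
      (by
        intro s
        simp only [Finset.mem_union, Finset.mem_image, hC, Prod.exists]
        constructor
        · rintro (⟨t, h⟩ | ⟨a, t, h, rfl⟩)
          · exact ⟨t, Or.inl h⟩
          · exact ⟨t, Or.inr h⟩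
        · rintro ⟨t, h | h⟩
          · exact Or.inl ⟨t, h⟩
          · exact Or.inr ⟨s, t, h, rfl⟩)
    set F := tGreedyAux d E rest (M ∪ R) (C ∪ R.image Prod.fst) with hF
    have hjr : j ∉ rest := fun h => lt_irrefl _ (hl.1 j h)
    have hFj : ∀ s, (s, j) ∈ F ↔ (s, j) ∈ R := by
      intro s
      rw [IH s j, Finset.mem_union]
      constructor
      · rintro ((h | h) | h)
        · exact absurd (hM s j h j List.mem_cons_self) (lt_irrefl _)
        · exact h
        · exact absurd h.1 hjr
      · exact fun h => Or.inl (Or.inr h)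
    have hFM : ∀ s, ∀ t' < j, ((s, t') ∈ F ↔ (s, t') ∈ M) := by
      intro s t' ht'
      rw [IH s t', Finset.mem_union]
      constructor
      · rintro ((h | h) | h)
        · exact h
        · exact absurd (hRj _ _ h) ht'.ne
        · exact absurd (hl.1 _ h.1) ht'.asymm
      · exact fun h => Or.inl (Or.inl h)
    have hGj : ∀ s, (s, j) ∈ R ↔ GC d E F s j := by
      intro s
      rw [hR s j]
      unfold GC
      simp only [true_and, Nat.zero_le, hFj]
      refine and_congr Iff.rfl (and_congr ?_ Iff.rfl)
      rw [hC]
      constructor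
      · intro h t' ht' h'
        exact h ⟨t', (hFM s t' ht').1 h'⟩
      · rintro h ⟨t', ht'⟩
        have := hM s t' ht' j List.mem_cons_self
        exact h t' this ((hFM s t' this).2 ht')
    rw [IH s t, Finset.mem_union, List.mem_cons]
    constructor
    · rintro ((h | h) | h)
      · exact Or.inl h
      · have := hRj _ _ h
        subst this
        exact Or.inr ⟨Or.inl rfl, (hGj s).1 h⟩
      · exact Or.inr ⟨Or.inr h.1, h.2⟩
    · rintro (h | ⟨rfl | h, h2⟩)
      · exact Or.inl (Or.inl h)
      · exact Or.inl (Or.inr ((hGj s).2 h2))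
      · exact Or.inr ⟨h, h2⟩

theorem ddm_insert {n k : ℕ} (d : ℕ) (E M : Finset (Fin n × Fin k)) (hM : DDM d E M)
    (s : Fin n) (hs : ∀ s' t', (s', t') ∈ M → s' < s) (t : Fin k) (he : (s, t) ∈ E) :
    DDM d E (insert (s, t) M) ↔
      ∀ s' : Fin n, s' < s → s.val < s'.val + d → (s', t) ∉ M := by
  constructor
  · rintro ⟨_, _, h3⟩ s' hs' hlt hmem
    have := h3 (s', t) (Finset.mem_insert_of_mem hmem) (s, t) (Finset.mem_insert_self _ _) rfl
      (by simp [hs'.ne])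
    have h4 : s'.val < s.val := hs'
    simp only [Nat.dist] at this
    omega
  · intro h
    obtain ⟨h1, h2, h3⟩ := hM
    refine ⟨Finset.insert_subset he h1, ?_, ?_⟩
    · intro e hee f hf hef
      rcases Finset.mem_insert.1 hee with rfl | hee <;> rcases Finset.mem_insert.1 hf with rfl | hf
      · rfl
      · exact absurd hef (hs f.1 f.2 hf).ne'
      · exact absurd hef (hs e.1 e.2 hee).ne
      · exact h2 e hee f hf hef
    · have aux : ∀ e ∈ M, e.2 = t → d ≤ Nat.dist e.1.val s.val := by
        rintro ⟨a, b⟩ hab rfl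
        have h5 := hs _ _ hab
        have h6 : a.val < s.val := h5
        have h7 : ¬ s.val < a.val + d := fun hh => h a h5 hh hab
        simp only [Nat.dist]
        omega
      intro e hee f hf hef hne
      rcases Finset.mem_insert.1 hee with rfl | hee <;> rcases Finset.mem_insert.1 hf with rfl | hf
      · exact absurd rfl hne
      · rw [Nat.dist_comm]; exact aux f hf hef.symm
      · exact aux e hee hef
      · exact h3 e hee f hf hef hne

theorem s_spec {n k : ℕ} (d : ℕ) (E : Finset (Fin n × Fin k)) :
    ∀ (l : List (Fin n)) (M : Finset (Fin n × Fin k)),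
    l.Pairwise (· < ·) → (∀ t, t ∈ l ∨ ∀ t' ∈ l, t < t') →
    (∀ s t, (s, t) ∈ M → ∀ s' ∈ l, s < s') → DDM d E M →
    ∀ s t, (s, t) ∈ sGreedy d E l M ↔
      (s, t) ∈ M ∨ (s ∈ l ∧ GC d E (sGreedy d E l M) s t) := by
  classical
  intro l
  induction l with
  | nil => intro M _ _ _ _ s t; simp [sGreedy]
  | cons j rest ih =>
    intro M hl hall hM hD s t
    rw [List.pairwise_cons] at hl
    have hMj : ∀ s' t', (s', t') ∈ M → s' < j := fun s' t' h => hM s' t' h j List.mem_cons_self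
    obtain ⟨M', hM', hD', hsub, hoth, hspec⟩ : ∃ M', sGreedy d E (j :: rest) M = sGreedy d E rest M' ∧
        DDM d E M' ∧ M ⊆ M' ∧ (∀ s t, (s, t) ∈ M' → s ≠ j → (s, t) ∈ M) ∧
        ∀ t, (j, t) ∈ M' ↔ (j, t) ∈ E ∧ (∀ t' < t, (j, t') ∉ M') ∧
          ∀ s' : Fin n, s' < j → j.val < s'.val + d → (s', t) ∉ M := by
      refine ⟨_, by rw [sGreedy], ?_⟩
      have hjM : ∀ t, (j, t) ∉ M := fun t h => lt_irrefl _ (hMj j t h)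
      split_ifs with h
      · have hmem := Finset.min'_mem _ h
        have hmin : ∀ x ∈ (Finset.univ.filter
            (fun t : Fin k => (j, t) ∈ E ∧ DDM d E (insert (j, t) M))), (Finset.univ.filter
            (fun t : Fin k => (j, t) ∈ E ∧ DDM d E (insert (j, t) M))).min' h ≤ x :=
          fun x hx => Finset.min'_le _ x hx
        set m := (Finset.univ.filter
            (fun t : Fin k => (j, t) ∈ E ∧ DDM d E (insert (j, t) M))).min' h with hm
        simp only [Finset.mem_filter, Finset.mem_univ, true_and] at hmem hmin
        refine ⟨hmem.2, Finset.subset_insert _ _, ?_, ?_⟩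
        · intro s t h1 h2
          rcases Finset.mem_insert.1 h1 with h1 | h1
          · exact absurd (Prod.mk.inj h1).1 h2
          · exact h1
        · intro t
          simp only [Finset.mem_insert, Prod.mk.injEq, true_and, hjM, or_false]
          constructor
          · rintro rfl
            exact ⟨hmem.1, fun t' h' => h'.ne, (ddm_insert d E M hD j hMj _ hmem.1).1 hmem.2⟩
          · rintro ⟨h1, h2, h3⟩
            have h4 := hmin t ⟨h1, (ddm_insert d E M hD j hMj _ h1).2 h3⟩
            rcases h4.lt_or_eq with h5 | h5
            · exact absurd rfl (h2 _ h5)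
            · exact h5.symm
      · refine ⟨hD, subset_rfl, fun _ _ h _ => h, ?_⟩
        intro t
        simp only [hjM, false_iff]
        rintro ⟨h1, -, h3⟩
        exact h ⟨t, by simpa using ⟨h1, (ddm_insert d E M hD j hMj _ h1).2 h3⟩⟩
    rw [hM']
    have IH := ih M' hl.2
      (by
        intro t
        rcases hall t with h | h
        · rcases List.mem_cons.1 h with rfl | h
          · right; exact hl.1
          · left; exact h
        · right; exact fun t' ht' => h t' (List.mem_cons_of_mem _ ht'))
      (by
        intro s t h s' hs'
        by_cases hsj : s = j
        · rw [hsj]; exact hl.1 s' hs'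
        · exact hM s t (hoth s t h hsj) s' (List.mem_cons_of_mem _ hs')) hD'
    set F := sGreedy d E rest M' with hF
    have hFle : ∀ s ≤ j, ∀ t, (s, t) ∈ F ↔ (s, t) ∈ M' := by
      intro s hs t
      rw [IH s t]
      refine or_iff_left ?_
      rintro ⟨h, -⟩
      exact absurd (hl.1 s h) hs.not_gt
    have hFlt : ∀ s < j, ∀ t, (s, t) ∈ F ↔ (s, t) ∈ M := by
      intro s hs t
      rw [hFle s hs.le t]
      exact ⟨fun h => hoth s t h hs.ne, fun h => hsub h⟩
    have hGj : ∀ t, (j, t) ∈ M' ↔ GC d E F j t := by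
      intro t
      rw [hspec t]
      unfold GC
      refine and_congr Iff.rfl (and_congr ?_ ?_)
      · exact forall₂_congr fun t' _ => not_congr (hFle j le_rfl t').symm
      · exact forall₂_congr fun s' h => forall_congr' fun _ => not_congr (hFlt s' h t).symm
    rw [IH s t, List.mem_cons]
    constructor
    · rintro (h | h)
      · by_cases hsj : s = j
        · subst hsj
          exact Or.inr ⟨Or.inl rfl, (hGj t).1 h⟩
        · exact Or.inl (hoth s t h hsj)
      · exact Or.inr ⟨Or.inr h.1, h.2⟩
    · rintro (h | ⟨rfl | h, h2⟩)
      · exact Or.inl (hsub h)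
      · exact Or.inl ((hGj t).2 h2)
      · exact Or.inr ⟨h, h2⟩

theorem approx {n k : ℕ} (d : ℕ) (E M Ms : Finset (Fin n × Fin k))
    (hM : ∀ s t, (s, t) ∈ M ↔ GC d E M s t) (hD : DDM d E Ms) :
    Ms.card ≤ 2 * M.card := by
  classical
  obtain ⟨h1, h2, h3⟩ := hD
  let A := Ms.filter (fun e => ∃ t, (e.1, t) ∈ M)
  let B := Ms.filter (fun e => ¬ ∃ t, (e.1, t) ∈ M)
  have hAB : A.card + B.card = Ms.card := Finset.card_filter_add_card_filter_not _
  have hA : A.card ≤ M.card := by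
    refine Finset.card_le_card_of_forall_subsingleton (fun e f => e.1 = f.1) ?_ ?_
    · intro e he
      obtain ⟨t, ht⟩ := (Finset.mem_filter.1 he).2
      exact ⟨(e.1, t), ht, rfl⟩
    · rintro f - a ⟨ha, ha'⟩ b ⟨hb, hb'⟩
      exact h2 a (Finset.mem_filter.1 ha).1 b (Finset.mem_filter.1 hb).1 (ha'.trans hb'.symm)
  have hB : B.card ≤ M.card := by
    refine Finset.card_le_card_of_forall_subsingleton
      (fun e f => e.2 = f.2 ∧ f.1 < e.1 ∧ e.1.val < f.1.val + d) ?_ ?_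
    · rintro ⟨s, t⟩ he
      obtain ⟨he1, he2⟩ := Finset.mem_filter.1 he
      by_contra hcon
      refine he2 ⟨t, (hM s t).2 ⟨h1 he1, fun t' _ h => he2 ⟨t', h⟩, fun s' a b c => ?_⟩⟩
      exact hcon ⟨(s', t), c, rfl, a, b⟩
    · rintro f - a ⟨ha, ha1, ha2, ha3⟩ b ⟨hb, hb1, hb2, hb3⟩
      by_contra hne
      have := h3 a (Finset.mem_filter.1 ha).1 b (Finset.mem_filter.1 hb).1 (ha1.trans hb1.symm) hne
      rw [Fin.lt_def] at ha2 hb2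
      simp only [Nat.dist] at this
      omega
  omega

/-- The outputs of `T`-Greedy and `S`-Greedy coincide; consequently `T`-Greedy is a
2-approximation algorithm for the unweighted `d`-distance matching problem. -/
theorem stmt13 {n k : ℕ} (d : ℕ) (hd : 1 ≤ d) (E : Finset (Fin n × Fin k)) :
    tGreedy d E = sGreedy d E (List.finRange n) ∅ ∧
    ∀ Ms, DDM d E Ms → Ms.card ≤ 2 * (tGreedy d E).card := by
  have hT : ∀ s t, (s, t) ∈ tGreedy d E ↔ GC d E (tGreedy d E) s t := by
    intro s t
    have := taux_spec d hd E (List.finRange k) ∅ ∅ (List.pairwise_lt_finRange k)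
      (fun t => Or.inl (List.mem_finRange t)) (by simp) (by simp) s t
    simpa [tGreedy] using this
  have hS : ∀ s t, (s, t) ∈ sGreedy d E (List.finRange n) ∅ ↔
      GC d E (sGreedy d E (List.finRange n) ∅) s t := by
    intro s t
    have := s_spec d E (List.finRange n) ∅ (List.pairwise_lt_finRange n)
      (fun t => Or.inl (List.mem_finRange t)) (by simp) (by simp [DDM]) s t
    simpa using this
  exact ⟨GC_unique d E _ _ hT hS, fun Ms hMs => approx d E _ Ms hT hMs⟩
end
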